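/- arXiv:1310.5921 — 6 statements merged into one kernel-verified Lean document; each statement's English description precedes it below -/
import Mathlib

section
/- For every integer k ≥ 1 and every real number t ≠ 0, the k-th derivative of the function f(t) = 1/(e^t − 1) satisfies f^{(k)}(t) = Σ_{m=1}^{k+1} (−1)^{m−1} (m−1)! S(k+1, m) (1/(1 − e^{−t}))^m. -/
open Real Finset

/-- Stirling numbers of the second kind, real-valued, via the explicit formula
`S(k,m) = (1/m!) ∑_{ℓ=1}^m (-1)^(m-ℓ) C(m,ℓ) ℓ^k`; this gives `0` when `m > k`. -/
noncomputable def S2 (k m : ℕ) : ℝ :=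
  (1 / (Nat.factorial m : ℝ)) *
    ∑ ℓ ∈ Finset.Icc 1 m, (-1 : ℝ) ^ (m - ℓ) * (Nat.choose m ℓ : ℝ) * (ℓ : ℝ) ^ k

lemma S2_rec (k m : ℕ) : S2 (k+1) (m+1) = ((m:ℝ)+1) * S2 k (m+1) + S2 k m := by
  have key : ∑ l ∈ Finset.Icc 1 (m+1), (-1 : ℝ) ^ (m+1 - l) * (Nat.choose (m+1) l : ℝ) * (l : ℝ) ^ (k+1)
      = ((m:ℝ)+1) * (∑ l ∈ Finset.Icc 1 (m+1), (-1 : ℝ) ^ (m+1 - l) * (Nat.choose (m+1) l : ℝ) * (l : ℝ) ^ k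
        + ∑ l ∈ Finset.Icc 1 m, (-1 : ℝ) ^ (m - l) * (Nat.choose m l : ℝ) * (l : ℝ) ^ k) := by
    have h2 : ∑ l ∈ Finset.Icc 1 m, (-1 : ℝ) ^ (m - l) * (Nat.choose m l : ℝ) * (l : ℝ) ^ k
        = ∑ l ∈ Finset.Icc 1 (m+1), -((-1 : ℝ) ^ (m + 1 - l) * (Nat.choose m l : ℝ) * (l : ℝ) ^ k) := by
      rw [Finset.sum_Icc_succ_top (by omega)]
      simp only [Nat.choose_succ_self, Nat.cast_zero, mul_zero, zero_mul, neg_zero, add_zero]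
      refine Finset.sum_congr rfl fun l hl => ?_
      have : m + 1 - l = (m - l) + 1 := by have := (Finset.mem_Icc.1 hl).2; omega
      rw [this, pow_succ]; ring
    rw [h2, ← Finset.sum_add_distrib, Finset.mul_sum]
    refine Finset.sum_congr rfl fun l hl => ?_
    obtain ⟨j, rfl⟩ : ∃ j, l = j + 1 := ⟨l - 1, by have := (Finset.mem_Icc.1 hl).1; omega⟩
    have e1 : ((m:ℝ)+1) * (m.choose j : ℝ) = ((m+1).choose (j+1) : ℝ) * ((j:ℝ)+1) := by
      exact_mod_cast Nat.add_one_mul_choose_eq m j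
    have e2 : ((m+1).choose (j+1) : ℝ) = m.choose j + m.choose (j+1) := by
      exact_mod_cast Nat.choose_succ_succ m j
    have e3 : ((m+1).choose (j+1) : ℝ) * ((j:ℝ)+1) = ((m:ℝ)+1) * (((m+1).choose (j+1) : ℝ) - m.choose (j+1)) := by
      rw [← e1, e2]; ring
    rw [pow_succ]
    push_cast
    linear_combination ((-1:ℝ)^(m-j) * ((j:ℝ)+1)^k) * e3
  unfold S2
  rw [key, Nat.factorial_succ]
  have : (m.factorial : ℝ) ≠ 0 := by exact_mod_cast Nat.factorial_ne_zero m
  have : (m:ℝ)+1 ≠ 0 := by positivity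
  push_cast
  field_simp

lemma S2_zero_left (m : ℕ) : S2 0 (m+1) = (-1)^m / ((m+1).factorial : ℝ) := by
  have h : ∑ l ∈ Finset.Icc 1 (m+1), (-1 : ℝ) ^ (m+1 - l) * (Nat.choose (m+1) l : ℝ) = (-1)^m := by
    have h0 := add_pow (1:ℝ) (-1) (m+1)
    rw [Finset.range_eq_Ico, Finset.sum_eq_sum_Ico_succ_bot (by omega)] at h0
    have : Finset.Icc 1 (m+1) = Finset.Ico (0+1) (m+1+1) := by rfl
    rw [this]
    simp [pow_succ] at h0
    simp
    linarith
  unfold S2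
  simp only [pow_zero, mul_one]
  rw [h]; ring

lemma S2_right_zero (k : ℕ) : S2 k 0 = 0 := by simp [S2]

lemma S2_vanish (k : ℕ) : ∀ m, k + 1 < m → S2 (k+1) m = 0 := by
  induction k with
  | zero =>
    intro m hm
    obtain ⟨j, rfl⟩ : ∃ j, m = j + 1 + 1 := ⟨m - 2, by omega⟩
    rw [S2_rec, S2_zero_left, S2_zero_left, Nat.factorial_succ (j+1)]
    have : ((j+1).factorial : ℝ) ≠ 0 := by exact_mod_cast Nat.factorial_ne_zero _
    have : (j:ℝ)+1+1 ≠ 0 := by positivity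
    push_cast
    field_simp
    ring
  | succ k ih =>
    intro m hm
    obtain ⟨j, rfl⟩ : ∃ j, m = j + 1 := ⟨m - 1, by omega⟩
    rw [S2_rec, ih _ (by omega), ih _ (by omega)]; ring

lemma S2_one_one : S2 1 1 = 1 := by simp [S2]

lemma hasDerivAt_g (t : ℝ) (ht : t ≠ 0) :
    HasDerivAt (fun t : ℝ => 1 / (1 - Real.exp (-t)))
      (1 / (1 - Real.exp (-t)) - (1 / (1 - Real.exp (-t)))^2) t := by
  have hne : 1 - Real.exp (-t) ≠ 0 := by
    intro h
    have : Real.exp (-t) = 1 := by linarith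
    rw [Real.exp_eq_one_iff] at this
    exact ht (by linarith)
  have h1 : HasDerivAt (fun t : ℝ => 1 - Real.exp (-t)) (Real.exp (-t)) t := by
    have := ((hasDerivAt_neg t).exp).const_sub 1
    simpa using this
  have h2 := h1.inv hne
  simp only [one_div]
  refine h2.congr_deriv ?_
  field_simp
  ring

lemma main_aux (k : ℕ) : ∀ t : ℝ, t ≠ 0 →
    iteratedDeriv k (fun t : ℝ => 1 / (Real.exp t - 1)) t =
      ∑ m ∈ Finset.range (k + 1),
        (-1 : ℝ) ^ m * (Nat.factorial m : ℝ) * S2 (k + 1) (m+1) *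
          (1 / (1 - Real.exp (-t))) ^ (m+1) - (if k = 0 then 1 else 0) := by
  induction k with
  | zero =>
    intro t ht
    have hne : Real.exp t - 1 ≠ 0 := by
      intro h
      have : Real.exp t = 1 := by linarith
      rw [Real.exp_eq_one_iff] at this
      exact ht this
    have h3 : 1 - Real.exp (-t) = (Real.exp t - 1) / Real.exp t := by
      rw [Real.exp_neg]; field_simp
    simp [S2_one_one]
    rw [h3]
    field_simp
    ring
  | succ k ih =>
    intro t ht
    rw [iteratedDeriv_succ]
    have hev := (isOpen_ne.eventually_mem ht).mono (fun s hs => ih s hs)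
    rw [Filter.EventuallyEq.deriv_eq hev]
    have hd := (HasDerivAt.fun_sum (u := Finset.range (k+1)) fun m _ =>
      ((hasDerivAt_g t ht).pow (m+1)).const_mul
        ((-1 : ℝ) ^ m * (Nat.factorial m : ℝ) * S2 (k + 1) (m+1))).sub_const
        (if k = 0 then (1:ℝ) else 0)
    refine hd.deriv.trans ?_
    generalize 1 / (1 - Real.exp (-t)) = g
    simp only [S2_rec (k+1)]
    simp only [Nat.succ_ne_zero, if_false, sub_zero, mul_add, add_mul, Finset.sum_add_distrib]
    rw [Finset.sum_range_succ _ (k+1), Finset.sum_range_succ _ (k+1),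
      Finset.sum_range_succ' (fun m => (-1 : ℝ) ^ m * (Nat.factorial m : ℝ) * S2 (k + 1) m * g ^ (m+1)) (k+1)]
    rw [S2_vanish k (k+1+1) (by omega), S2_right_zero]
    simp only [mul_zero, zero_mul, add_zero]
    rw [← Finset.sum_add_distrib, ← Finset.sum_add_distrib]
    refine Finset.sum_congr rfl fun m _ => ?_
    rw [Nat.factorial_succ]
    push_cast
    ring

theorem stmt_3 (k : ℕ) (hk : 1 ≤ k) (t : ℝ) (ht : t ≠ 0) :
    iteratedDeriv k (fun t : ℝ => 1 / (Real.exp t - 1)) t =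
      ∑ m ∈ Finset.Icc 1 (k + 1),
        (-1 : ℝ) ^ (m - 1) * (Nat.factorial (m - 1) : ℝ) * S2 (k + 1) m *
          (1 / (1 - Real.exp (-t))) ^ m := by
  rw [main_aux k t ht, if_neg (by omega), sub_zero]
  have : Finset.Icc 1 (k+1) = Finset.Ico 1 (k+1+1) := by rfl
  rw [this, Finset.sum_Ico_eq_sum_range]
  simp [add_comm 1]
end

section
/- For every integer k ≥ 1 and every real number t ≠ 0, the k-th power of the function g(t) = 1/(1 − e^{−t}) satisfies (1/(1 − e^{−t}))^k = ((−1)^{k−1}/(k−1)!) Σ_{m=1}^{k} s(k, m) g^{(m−1)}(t), where g^{(m−1)} denotes the (m−1)-st derivative of g (with g^{(0)} = g). -/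
open Real Finset

/-- Signed Stirling numbers of the first kind, real-valued: the coefficient of `x^m` in
`x (x-1) ⋯ (x-k+1)`. -/
noncomputable def s1 (k m : ℕ) : ℝ := (descPochhammer ℝ k).coeff m

theorem s1_rec (k m : ℕ) : s1 (k + 1) (m + 1) = s1 k m - k * s1 k (m + 1) := by
  unfold s1
  rw [descPochhammer_succ_right, mul_sub, Polynomial.coeff_sub, Polynomial.coeff_mul_X,
    ← Polynomial.C_eq_natCast, Polynomial.coeff_mul_C]
  ring

theorem s1_zero (n : ℕ) : s1 (n + 1) 0 = 0 := by
  unfold s1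
  rw [descPochhammer_succ_left]
  simp

theorem s1_top (n : ℕ) : s1 n (n + 1) = 0 := by
  unfold s1
  apply Polynomial.coeff_eq_zero_of_natDegree_lt
  rw [descPochhammer_natDegree]
  omega

theorem one_sub_exp_ne {t : ℝ} (ht : t ≠ 0) : 1 - Real.exp (-t) ≠ 0 := by
  intro h
  have : Real.exp (-t) = 1 := by linarith
  rw [Real.exp_eq_one_iff] at this
  exact ht (by linarith)

theorem g_hasDerivAt {t : ℝ} (ht : t ≠ 0) :
    HasDerivAt (fun t : ℝ => 1 / (1 - Real.exp (-t)))
      (1 / (1 - Real.exp (-t)) - (1 / (1 - Real.exp (-t))) ^ 2) t := by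
  have h0 := one_sub_exp_ne ht
  have h1 : HasDerivAt (fun t : ℝ => 1 - Real.exp (-t)) (Real.exp (-t)) t := by
    have := ((hasDerivAt_neg t).exp).const_sub 1
    simpa using this
  have h2 := h1.inv h0
  simp only [one_div]
  refine h2.congr_deriv ?_
  field_simp
  ring

theorem g_iter {t : ℝ} (ht : t ≠ 0) (m : ℕ) :
    HasDerivAt (iteratedDeriv m (fun t : ℝ => 1 / (1 - Real.exp (-t))))
      (iteratedDeriv (m + 1) (fun t : ℝ => 1 / (1 - Real.exp (-t))) t) t := by
  rw [iteratedDeriv_succ]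
  apply DifferentiableAt.hasDerivAt
  have h : ContDiffAt ℝ (m + 1 : ℕ) (fun t : ℝ => 1 / (1 - Real.exp (-t))) t :=
    contDiffAt_const.div (by fun_prop) (one_sub_exp_ne ht)
  rw [iteratedDeriv_eq_equiv_comp, LinearIsometryEquiv.comp_differentiableAt_iff]
  apply ContDiffAt.differentiableAt_iteratedFDeriv h
  exact_mod_cast Nat.lt_succ_self m

theorem key (n : ℕ) : ∀ t : ℝ, t ≠ 0 →
    ∑ m ∈ range (n + 1),
      s1 (n + 1) (m + 1) * iteratedDeriv m (fun t : ℝ => 1 / (1 - Real.exp (-t))) t =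
    (-1) ^ n * (Nat.factorial n : ℝ) * (1 / (1 - Real.exp (-t))) ^ (n + 1) := by
  induction n with
  | zero => intro t ht; simp [s1]
  | succ n ih =>
    intro t ht
    have hL : HasDerivAt (fun t => ∑ m ∈ range (n + 1),
        s1 (n + 1) (m + 1) * iteratedDeriv m (fun t : ℝ => 1 / (1 - Real.exp (-t))) t)
        (∑ m ∈ range (n + 1),
        s1 (n + 1) (m + 1) * iteratedDeriv (m + 1) (fun t : ℝ => 1 / (1 - Real.exp (-t))) t) t :=
      HasDerivAt.fun_sum fun m _ => (g_iter ht m).const_mul _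
    have hR := ((g_hasDerivAt ht).fun_pow (n + 1)).const_mul ((-1) ^ n * (Nat.factorial n : ℝ))
    have hE := hR.congr_of_eventuallyEq
      (f₁ := fun t => ∑ m ∈ range (n + 1),
        s1 (n + 1) (m + 1) * iteratedDeriv m (fun t : ℝ => 1 / (1 - Real.exp (-t))) t) (by
        filter_upwards [isOpen_ne.mem_nhds ht] with u hu
        exact ih u hu)
    have hU := hL.unique hE
    simp only [s1_rec (n + 1), sub_mul, sum_sub_distrib]
    rw [sum_range_succ' _ (n + 1), sum_range_succ _ (n + 1), s1_zero, s1_top, hU]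
    simp only [mul_assoc, ← mul_sum]
    rw [ih t ht, Nat.factorial_succ]
    push_cast
    ring

theorem stmt_4 (k : ℕ) (hk : 1 ≤ k) (t : ℝ) (ht : t ≠ 0) :
    (1 / (1 - Real.exp (-t))) ^ k =
      ((-1 : ℝ) ^ (k - 1) / (Nat.factorial (k - 1) : ℝ)) *
        ∑ m ∈ Finset.Icc 1 k,
          s1 k m * iteratedDeriv (m - 1) (fun t : ℝ => 1 / (1 - Real.exp (-t))) t := by
  obtain ⟨n, rfl⟩ : ∃ n, k = n + 1 := ⟨k - 1, by omega⟩
  have h := key n t ht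
  have hs : ∑ m ∈ Finset.Icc 1 (n + 1),
          s1 (n + 1) m * iteratedDeriv (m - 1) (fun t : ℝ => 1 / (1 - Real.exp (-t))) t =
      ∑ m ∈ range (n + 1),
      s1 (n + 1) (m + 1) * iteratedDeriv m (fun t : ℝ => 1 / (1 - Real.exp (-t))) t := by
    rw [← Finset.Ico_add_one_right_eq_Icc, Finset.sum_Ico_eq_sum_range]
    apply sum_congr (by simp)
    intro m _
    rw [add_comm 1 m, Nat.add_sub_cancel]
  rw [hs, h, Nat.add_sub_cancel]
  have hf : (Nat.factorial n : ℝ) ≠ 0 := by positivity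
  have h1 : ((-1 : ℝ) ^ n) * (-1) ^ n = 1 := by rw [← mul_pow]; simp
  generalize (1 / (1 - Real.exp (-t))) ^ (n + 1) = x
  rw [div_mul_eq_mul_div, eq_div_iff hf]
  linear_combination (-(x * (Nat.factorial n : ℝ))) * h1
end

section
/- For every integer k ≥ 1 and every real number t ≠ 0, one has (1/(1 − e^{−t}))^k = 1 + ((−1)^{k−1}/(k−1)!) Σ_{m=1}^{k} s(k, m) f^{(m−1)}(t), where f(t) = 1/(e^t − 1) and f^{(m−1)} denotes its (m−1)-st derivative (with f^{(0)} = f). -/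
open Real Finset

lemma aux_coeff (n m : ℕ) : s1 (n+2) (m+1) = s1 (n+1) m - ((n:ℝ)+1) * s1 (n+1) (m+1) := by
  unfold s1
  rw [descPochhammer_succ_right ℝ (n+1), mul_sub, Polynomial.coeff_sub, Polynomial.coeff_mul_X,
    ← Polynomial.C_eq_natCast, Polynomial.coeff_mul_C]
  push_cast
  ring

lemma aux_zero (n : ℕ) : s1 (n+1) 0 = 0 := by
  unfold s1
  rw [descPochhammer_succ_left, Polynomial.coeff_X_mul_zero]

lemma aux_top (n : ℕ) : s1 (n+1) (n+2) = 0 := by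
  unfold s1
  apply Polynomial.coeff_eq_zero_of_natDegree_lt
  rw [descPochhammer_natDegree]; omega

lemma aux_ne (t : ℝ) (ht : t ≠ 0) : Real.exp t - 1 ≠ 0 := by
  intro h
  exact ht (Real.exp_eq_one_iff t |>.1 (by linarith))

lemma aux_diff (m : ℕ) (t : ℝ) (ht : t ≠ 0) :
    HasDerivAt (iteratedDeriv m (fun t : ℝ => 1 / (Real.exp t - 1)))
      (iteratedDeriv (m+1) (fun t : ℝ => 1 / (Real.exp t - 1)) t) t := by
  rw [iteratedDeriv_succ]
  apply DifferentiableAt.hasDerivAt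
  have h : ContDiffAt ℝ (m+1 : ℕ) (fun t : ℝ => 1 / (Real.exp t - 1)) t :=
    contDiffAt_const.div (Real.contDiff_exp.contDiffAt.sub contDiffAt_const) (aux_ne t ht)
  have h' := (contDiffWithinAt_univ.2 h).differentiableWithinAt_iteratedDerivWithin (m := m)
    (by exact_mod_cast Nat.lt_succ_self m) (by simpa using uniqueDiffOn_univ)
  rw [iteratedDerivWithin_univ] at h'
  exact differentiableWithinAt_univ.1 h'

lemma aux_main (n : ℕ) : ∀ t : ℝ, t ≠ 0 →
    ∑ m ∈ Finset.range (n+1),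
      s1 (n+1) (m+1) * iteratedDeriv m (fun t : ℝ => 1 / (Real.exp t - 1)) t
      = (-1)^n * (n.factorial : ℝ) * ((1 + 1 / (Real.exp t - 1)) ^ (n+1) - 1) := by
  induction n with
  | zero =>
    intro t ht
    simp [s1]
  | succ n ih =>
    intro t ht
    have hne := aux_ne t ht
    have h1 : HasDerivAt (fun t => ∑ m ∈ Finset.range (n+1),
      s1 (n+1) (m+1) * iteratedDeriv m (fun t : ℝ => 1 / (Real.exp t - 1)) t)
      (∑ m ∈ Finset.range (n+1),
      s1 (n+1) (m+1) * iteratedDeriv (m+1) (fun t : ℝ => 1 / (Real.exp t - 1)) t) t :=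
      HasDerivAt.fun_sum fun m _ => (aux_diff m t ht).const_mul _
    have h0 : HasDerivAt (fun t : ℝ => 1 / (Real.exp t - 1))
        (-(1 + 1 / (Real.exp t - 1)) * (1 / (Real.exp t - 1))) t := by
      have := (hasDerivAt_const t (1:ℝ)).div ((Real.hasDerivAt_exp t).sub_const 1) hne
      refine this.congr_deriv ?_
      field_simp
      ring
    have h2 := (((h0.const_add 1).pow (n+1)).sub_const 1).const_mul
      ((-1)^n * (n.factorial : ℝ))
    have h3 := h1.congr_of_eventuallyEq (f₁ := fun t : ℝ =>
      (-1)^n * (n.factorial : ℝ) * ((1 + 1 / (Real.exp t - 1)) ^ (n+1) - 1)) (by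
        filter_upwards [isOpen_ne.mem_nhds ht] with u hu
        exact (ih u hu).symm)
    have h4 := h3.unique h2
    have e1 : ∑ m ∈ Finset.range (n+1+1), s1 (n+1) m *
        iteratedDeriv m (fun t : ℝ => 1 / (Real.exp t - 1)) t = ∑ m ∈ Finset.range (n+1),
      s1 (n+1) (m+1) * iteratedDeriv (m+1) (fun t : ℝ => 1 / (Real.exp t - 1)) t := by
      rw [Finset.sum_range_succ', aux_zero]; ring
    have e2 : ∑ m ∈ Finset.range (n+1+1), s1 (n+1) (m+1) *
        iteratedDeriv m (fun t : ℝ => 1 / (Real.exp t - 1)) t = ∑ m ∈ Finset.range (n+1),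
      s1 (n+1) (m+1) * iteratedDeriv m (fun t : ℝ => 1 / (Real.exp t - 1)) t := by
      rw [Finset.sum_range_succ, aux_top]; ring
    simp only [show n+1+1 = n+2 from rfl, aux_coeff, sub_mul, mul_assoc]
    rw [Finset.sum_sub_distrib, ← Finset.mul_sum, e1, e2, h4, ih t ht]
    generalize 1 / (Real.exp t - 1) = f
    rw [Nat.factorial_succ]
    push_cast
    ring

theorem stmt_6 (k : ℕ) (hk : 1 ≤ k) (t : ℝ) (ht : t ≠ 0) :
    (1 / (1 - Real.exp (-t))) ^ k =
      1 + ((-1 : ℝ) ^ (k - 1) / (Nat.factorial (k - 1) : ℝ)) *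
        ∑ m ∈ Finset.Icc 1 k,
          s1 k m * iteratedDeriv (m - 1) (fun t : ℝ => 1 / (Real.exp t - 1)) t := by
  obtain ⟨n, rfl⟩ : ∃ n, k = n + 1 := ⟨k - 1, by omega⟩
  have hg : 1 / (1 - Real.exp (-t)) = 1 + 1 / (Real.exp t - 1) := by
    have hne := aux_ne t ht
    have hp := Real.exp_ne_zero t
    have h : 1 - Real.exp (-t) = (Real.exp t - 1) / Real.exp t := by
      rw [Real.exp_neg]; field_simp
    rw [h]
    field_simp
    ring
  have hs : ∑ m ∈ Finset.Icc 1 (n+1),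
      s1 (n+1) m * iteratedDeriv (m - 1) (fun t : ℝ => 1 / (Real.exp t - 1)) t =
      ∑ m ∈ Finset.range (n+1),
      s1 (n+1) (m+1) * iteratedDeriv m (fun t : ℝ => 1 / (Real.exp t - 1)) t := by
    have := Finset.sum_Ico_add' (fun m => s1 (n+1) m *
      iteratedDeriv (m - 1) (fun t : ℝ => 1 / (Real.exp t - 1)) t) 0 (n+1) 1
    simp only [Nat.add_sub_cancel] at this
    rw [Finset.range_eq_Ico, this]
    rfl
  rw [hg, hs, aux_main n t ht, Nat.add_sub_cancel]
  have hf : (n.factorial : ℝ) ≠ 0 := by positivity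
  have hm : ((-1:ℝ)^n) * (-1)^n = 1 := by rw [← mul_pow]; simp
  generalize (1 + 1 / (Real.exp t - 1)) ^ (n+1) = G
  field_simp
  linear_combination (-(G-1)) * hm
end

section
/- For every integer k ≥ 1, the Bernoulli number B_{2k} satisfies B_{2k} = 1 + Σ_{m=1}^{2k−1} S(2k+1, m+1) S(2k, 2k−m) / C(2k, m) − (2k/(2k+1)) Σ_{m=1}^{2k} S(2k, m) S(2k+1, 2k−m+1) / C(2k, m−1). -/
open Real Finset

open PowerSeries in
/-- `u = e^s - 1` as a formal power series. -/
noncomputable def uu : PowerSeries ℝ := PowerSeries.exp ℝ - 1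

/-- The regular part of `1 / (e^s - 1)`. -/
noncomputable def bb : PowerSeries ℝ :=
  PowerSeries.mk fun n => PowerSeries.coeff (n + 1) (bernoulliPowerSeries ℝ)

/-- `F n = (-1)^n u^(n+1) (1/u)^(n)`. -/
noncomputable def FF (n : ℕ) : PowerSeries ℝ :=
  ∑ m ∈ Finset.range (n + 1),
    PowerSeries.C ((Nat.factorial m : ℝ) * (Nat.stirlingSecond (n + 1) (m + 1) : ℝ)) * uu ^ (n - m)

lemma sum_Icc_one_eq (N : ℕ) (f : ℕ → ℝ) :
    ∑ m ∈ Finset.Icc 1 N, f m = ∑ i ∈ Finset.range N, f (i + 1) := by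
  induction N with
  | zero => simp
  | succ N ih => rw [Finset.sum_Icc_succ_top (by omega), ih, Finset.sum_range_succ]

lemma deriv_uu : PowerSeries.derivative ℝ uu = 1 + uu := by
  simp [uu, PowerSeries.derivative_exp]

lemma deriv_uu_pow (j : ℕ) :
    uu * PowerSeries.derivative ℝ (uu ^ j) = (j : PowerSeries ℝ) * (uu ^ j + uu ^ (j + 1)) := by
  rw [PowerSeries.derivative_pow, deriv_uu]
  cases j with
  | zero => simp
  | succ j => simp only [Nat.add_sub_cancel]; ring

lemma coeff_uu_pow (k m : ℕ) (hk : 1 ≤ k) :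
    PowerSeries.coeff k (uu ^ m) = (Nat.factorial m : ℝ) * S2 k m / (Nat.factorial k : ℝ) := by
  have h1 : uu ^ m = ∑ l ∈ Finset.range (m + 1),
      PowerSeries.exp ℝ ^ l * PowerSeries.C ((-1 : ℝ) ^ (m - l) * (Nat.choose m l : ℝ)) := by
    rw [uu, sub_eq_add_neg, add_pow]
    refine Finset.sum_congr rfl fun l _ => ?_
    simp [mul_assoc]
  rw [h1, map_sum, Finset.sum_range_succ', S2, sum_Icc_one_eq]
  have hm : (Nat.factorial m : ℝ) ≠ 0 := by positivity
  have hz : PowerSeries.coeff k (PowerSeries.exp ℝ ^ 0 *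
      PowerSeries.C ((-1 : ℝ) ^ (m - 0) * (Nat.choose m 0 : ℝ))) = 0 := by
    rw [PowerSeries.coeff_mul_C, pow_zero, PowerSeries.coeff_one, if_neg (by omega), zero_mul]
  rw [hz, add_zero, ← mul_assoc, mul_one_div_cancel hm, one_mul, Finset.sum_div]
  refine Finset.sum_congr rfl fun l _ => ?_
  rw [PowerSeries.coeff_mul_C, PowerSeries.exp_pow_eq_rescale_exp, PowerSeries.coeff_rescale,
    PowerSeries.coeff_exp]
  simp
  ring

lemma coeff_uu_pow' (k : ℕ) : ∀ m : ℕ,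
    PowerSeries.coeff k (uu ^ m) =
      (Nat.factorial m : ℝ) * (Nat.stirlingSecond k m : ℝ) / (Nat.factorial k : ℝ) := by
  induction k with
  | zero =>
    intro m
    cases m with
    | zero => simp
    | succ m => simp [uu]
  | succ k ih =>
    intro m
    cases m with
    | zero => simp [PowerSeries.coeff_one]
    | succ m =>
      have h := PowerSeries.coeff_derivative (R := ℝ) (uu ^ (m + 1)) k
      rw [PowerSeries.derivative_pow, deriv_uu, Nat.add_sub_cancel] at h
      have e : ((m + 1 : ℕ) : PowerSeries ℝ) * uu ^ m * (1 + uu) =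
          PowerSeries.C ((m + 1 : ℕ) : ℝ) * (uu ^ m + uu ^ (m + 1)) := by
        simp; ring
      rw [e, PowerSeries.coeff_C_mul, map_add, ih, ih] at h
      have hk : ((k : ℝ) + 1) ≠ 0 := by positivity
      have hf : (Nat.factorial k : ℝ) ≠ 0 := by positivity
      rw [Nat.stirlingSecond_succ_succ]
      rw [eq_div_iff (by positivity)]
      rw [Nat.factorial_succ k]
      push_cast [Nat.factorial_succ m] at h ⊢
      rw [mul_comm ((k : ℝ) + 1), mul_comm, mul_assoc, mul_comm ((k : ℝ) + 1), ← h]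
      field_simp
      ring

lemma S2_eq (k m : ℕ) (hk : 1 ≤ k) : S2 k m = (Nat.stirlingSecond k m : ℝ) := by
  have h := coeff_uu_pow k m hk
  rw [coeff_uu_pow'] at h
  have hf : (Nat.factorial k : ℝ) ≠ 0 := by positivity
  have hm : (Nat.factorial m : ℝ) ≠ 0 := by positivity
  field_simp at h
  exact h.symm

lemma FF_succ (n : ℕ) :
    FF (n + 1) = ((n : PowerSeries ℝ) + 1) * (1 + uu) * FF n
      - uu * PowerSeries.derivative ℝ (FF n) := by
  have hR : ((n : PowerSeries ℝ) + 1) * (1 + uu) * FF n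
      - uu * PowerSeries.derivative ℝ (FF n) =
      ∑ m ∈ Finset.range (n + 1), PowerSeries.C ((Nat.factorial m : ℝ) *
        (Nat.stirlingSecond (n + 1) (m + 1) : ℝ) * (m + 1)) *
          (uu ^ (n - m) + uu ^ (n - m + 1)) := by
    rw [FF, map_sum, Finset.mul_sum, Finset.mul_sum, ← Finset.sum_sub_distrib]
    refine Finset.sum_congr rfl fun m hm => ?_
    have hm' : m ≤ n := by simpa [Nat.lt_succ_iff] using hm
    obtain ⟨j, rfl⟩ := Nat.exists_eq_add_of_le hm'
    have h2 := deriv_uu_pow j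
    rw [Derivation.leibniz, PowerSeries.derivative_C, smul_zero, add_zero, smul_eq_mul,
      Nat.add_sub_cancel_left, mul_left_comm uu, h2, map_mul _ _ ((m : ℝ) + 1)]
    push_cast
    simp only [map_add, map_one, map_natCast]
    ring
  rw [hR, FF]
  have h3 : ∀ m ∈ Finset.range (n + 1), PowerSeries.C ((Nat.factorial m : ℝ) *
        (Nat.stirlingSecond (n + 1) (m + 1) : ℝ) * (m + 1)) *
          (uu ^ (n - m) + uu ^ (n - m + 1)) =
      PowerSeries.C ((Nat.factorial m : ℝ) *
        (Nat.stirlingSecond (n + 1) (m + 1) : ℝ) * (m + 1)) * uu ^ (n + 1 - (m + 1)) +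
      PowerSeries.C ((Nat.factorial m : ℝ) *
        (Nat.stirlingSecond (n + 1) (m + 1) : ℝ) * (m + 1)) * uu ^ (n + 1 - m) := by
    intro m hm
    have hm' : m ≤ n := by simpa [Nat.lt_succ_iff] using hm
    rw [mul_add, Nat.succ_sub hm', Nat.add_sub_add_right]
  rw [Finset.sum_congr rfl h3, Finset.sum_add_distrib]
  have h4 : ∀ m ∈ Finset.range (n + 1 + 1), PowerSeries.C ((Nat.factorial m : ℝ) *
        (Nat.stirlingSecond (n + 1 + 1) (m + 1) : ℝ)) * uu ^ (n + 1 - m) =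
      PowerSeries.C ((Nat.factorial m : ℝ) *
        (Nat.stirlingSecond (n + 1) m : ℝ)) * uu ^ (n + 1 - m) +
      PowerSeries.C ((Nat.factorial m : ℝ) *
        (Nat.stirlingSecond (n + 1) (m + 1) : ℝ) * (m + 1)) * uu ^ (n + 1 - m) := by
    intro m _
    rw [← add_mul, ← map_add, Nat.stirlingSecond_succ_succ (n + 1) m]
    congr 2
    push_cast
    ring
  rw [Finset.sum_congr rfl h4, Finset.sum_add_distrib]
  congr 1
  · rw [Finset.sum_range_succ']
    simp only [Nat.stirlingSecond_succ_zero, Nat.cast_zero, mul_zero, map_zero, zero_mul, add_zero]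
    refine Finset.sum_congr rfl fun m _ => ?_
    congr 2
    rw [Nat.factorial_succ]
    push_cast
    ring
  · rw [Finset.sum_range_succ, Nat.stirlingSecond_eq_zero_of_lt (by omega : n + 1 < n + 1 + 1)]
    simp

lemma X_eq : (PowerSeries.X : PowerSeries ℝ) = uu * (1 + PowerSeries.X * bb) := by
  have h : (1 : PowerSeries ℝ) + PowerSeries.X * bb = bernoulliPowerSeries ℝ := by
    ext n
    cases n with
    | zero => simp [bernoulliPowerSeries]
    | succ n =>
      rw [map_add, PowerSeries.coeff_succ_X_mul, bb, PowerSeries.coeff_mk, PowerSeries.coeff_one]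
      simp
  rw [h, mul_comm, uu, bernoulliPowerSeries_mul_exp_sub_one]

lemma FF_key (n : ℕ) :
    PowerSeries.X ^ (n + 1) * FF n = uu ^ (n + 1) *
      ((Nat.factorial n : PowerSeries ℝ) + (-1) ^ n * PowerSeries.X ^ (n + 1) *
        (PowerSeries.derivative ℝ)^[n] bb) := by
  induction n with
  | zero => simpa [FF, Nat.stirlingSecond] using X_eq
  | succ n ih =>
    rw [FF_succ, Function.iterate_succ_apply']
    set b := (PowerSeries.derivative ℝ)^[n] bb with hb
    have hd := congrArg (PowerSeries.derivative ℝ) ih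
    have hs : PowerSeries.derivative ℝ ((-1 : PowerSeries ℝ) ^ n) = 0 := by
      rcases neg_one_pow_eq_or (PowerSeries ℝ) n with h | h <;> simp [h]
    have hf : PowerSeries.derivative ℝ (Nat.factorial n : PowerSeries ℝ) = 0 := by
      simp
    simp only [Derivation.leibniz, smul_eq_mul, map_add, PowerSeries.derivative_pow, deriv_uu,
      hs, hf, PowerSeries.derivative_X, Nat.add_sub_cancel] at hd
    push_cast [Nat.factorial_succ] at hd ⊢
    linear_combination (-uu * PowerSeries.X) * hd +
      (((n : PowerSeries ℝ) + 1) * (1 + uu) * PowerSeries.X + ((n : PowerSeries ℝ) + 1) * uu) * ih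

lemma uu_fact : ∃ v : PowerSeries ℝ, uu = PowerSeries.X * v ∧ PowerSeries.constantCoeff v = 1 := by
  have h : PowerSeries.X ∣ uu := by
    rw [PowerSeries.X_dvd_iff]; simp [uu]
  obtain ⟨v, hv⟩ := h
  refine ⟨v, hv, ?_⟩
  have h1 : PowerSeries.coeff 1 uu = PowerSeries.coeff 1 (PowerSeries.X * v) := by rw [← hv]
  rw [show (1 : ℕ) = 0 + 1 from rfl, PowerSeries.coeff_succ_X_mul] at h1
  rw [← PowerSeries.coeff_zero_eq_constantCoeff_apply, ← h1]
  simp [uu, PowerSeries.coeff_exp, PowerSeries.coeff_one]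

lemma coeff_A (n : ℕ) : PowerSeries.coeff n (FF n) =
    (Nat.factorial n : ℝ) * PowerSeries.coeff (n + (n + 1)) (uu ^ (n + 1)) := by
  have h := congrArg (PowerSeries.coeff (n + (n + 1))) (FF_key n)
  rw [PowerSeries.coeff_X_pow_mul] at h
  obtain ⟨v, hv, -⟩ := uu_fact
  have e : uu ^ (n + 1) * ((Nat.factorial n : PowerSeries ℝ) + (-1) ^ n * PowerSeries.X ^ (n + 1) *
        (PowerSeries.derivative ℝ)^[n] bb) = PowerSeries.C (Nat.factorial n : ℝ) * uu ^ (n + 1) +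
        PowerSeries.X ^ (n + 1) * (PowerSeries.X ^ (n + 1) * (v ^ (n + 1) * (-1) ^ n *
          (PowerSeries.derivative ℝ)^[n] bb)) := by
    rw [mul_add]
    congr 1
    · simp; ring
    · rw [hv, mul_pow]; ring
  rw [h, e, map_add, PowerSeries.coeff_C_mul, PowerSeries.coeff_X_pow_mul,
    PowerSeries.coeff_X_pow_mul', if_neg (by omega), add_zero]

lemma coeff_B (n : ℕ) : PowerSeries.coeff (n + 2) (uu * FF n) =
    (Nat.factorial n : ℝ) * PowerSeries.coeff (n + 2 + (n + 1)) (uu ^ (n + 2)) +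
      (-1) ^ n * ((bernoulli (n + 1) : ℚ) : ℝ) / (n + 1) := by
  have h := congrArg (fun f => PowerSeries.coeff (n + 2 + (n + 1)) (uu * f)) (FF_key n)
  beta_reduce at h
  rw [mul_left_comm, PowerSeries.coeff_X_pow_mul] at h
  obtain ⟨v, hv, hv1⟩ := uu_fact
  have e : uu * (uu ^ (n + 1) * ((Nat.factorial n : PowerSeries ℝ) +
      (-1) ^ n * PowerSeries.X ^ (n + 1) *
        (PowerSeries.derivative ℝ)^[n] bb)) = PowerSeries.C (Nat.factorial n : ℝ) * uu ^ (n + 2) +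
        PowerSeries.X ^ (n + 1) * (PowerSeries.X ^ (n + 2) * (v ^ (n + 2) * (-1) ^ n *
          (PowerSeries.derivative ℝ)^[n] bb)) := by
    rw [mul_add, mul_add]
    congr 1
    · simp; ring
    · rw [hv, mul_pow]; ring
  rw [h, e, map_add, PowerSeries.coeff_C_mul, PowerSeries.coeff_X_pow_mul,
    PowerSeries.coeff_X_pow_mul', if_pos le_rfl, Nat.sub_self]
  congr 1
  rw [PowerSeries.coeff_zero_eq_constantCoeff_apply, map_mul, map_mul, map_pow, hv1,
    PowerSeries.constantCoeff_iterate_derivative]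
  have hf : (Nat.factorial n : ℝ) ≠ 0 := by positivity
  simp [bb, bernoulliPowerSeries, Nat.factorial_succ]
  field_simp

theorem stmt_8 (k : ℕ) (hk : 1 ≤ k) :
    ((bernoulli (2 * k) : ℚ) : ℝ) =
      1 + (∑ m ∈ Finset.Icc 1 (2 * k - 1),
            S2 (2 * k + 1) (m + 1) * S2 (2 * k) (2 * k - m) / (Nat.choose (2 * k) m : ℝ))
        - ((2 * k : ℝ) / (2 * k + 1)) *
            ∑ m ∈ Finset.Icc 1 (2 * k),
              S2 (2 * k) m * S2 (2 * k + 1) (2 * k - m + 1) /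
                (Nat.choose (2 * k) (m - 1) : ℝ) := by
  obtain ⟨n, hn⟩ : ∃ n, 2 * k = n + 1 := ⟨2 * k - 1, by omega⟩
  have hodd : (-1 : ℝ) ^ n = -1 := Odd.neg_one_pow ⟨k - 1, by omega⟩
  have hc : (2 * k : ℝ) = n + 1 := by exact_mod_cast hn
  rw [hc, hn, Nat.add_sub_cancel]
  have hA : 1 + (∑ m ∈ Finset.Icc 1 n,
      S2 (n + 1 + 1) (m + 1) * S2 (n + 1) (n + 1 - m) / (Nat.choose (n + 1) m : ℝ)) =
      PowerSeries.coeff (n + 1) (FF (n + 1)) := by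
    have h1 : PowerSeries.coeff (n + 1) (FF (n + 1)) = ∑ m ∈ Finset.range (n + 1 + 1),
        S2 (n + 1 + 1) (m + 1) * S2 (n + 1) (n + 1 - m) / (Nat.choose (n + 1) m : ℝ) := by
      rw [FF, map_sum]
      refine Finset.sum_congr rfl fun m hm => ?_
      have hm' : m ≤ n + 1 := by simpa [Nat.lt_succ_iff] using hm
      rw [PowerSeries.coeff_C_mul, coeff_uu_pow _ _ (by omega), S2_eq (n + 1 + 1) _ (by omega),
        Nat.cast_choose ℝ hm']
      field_simp
    rw [h1, Finset.sum_range_succ, Finset.sum_range_succ', sum_Icc_one_eq, S2_eq _ (0 + 1) (by omega),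
      Nat.stirlingSecond_one_right, Nat.sub_zero, Nat.sub_self, S2_eq _ 0 (by omega),
      S2_eq (n + 1) (n + 1) (by omega), Nat.stirlingSecond_self]
    simp
    ring
  have hB : (∑ m ∈ Finset.Icc 1 (n + 1), S2 (n + 1) m * S2 (n + 1 + 1) (n + 1 - m + 1) /
      (Nat.choose (n + 1) (m - 1) : ℝ)) = (n + 2) * PowerSeries.coeff (n + 2) (uu * FF n) := by
    rw [FF, Finset.mul_sum, map_sum, sum_Icc_one_eq, Finset.mul_sum]
    refine Finset.sum_congr rfl fun m hm => ?_
    have hm' : m ≤ n := by simpa [Nat.lt_succ_iff] using hm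
    obtain ⟨j, rfl⟩ := Nat.exists_eq_add_of_le hm'
    rw [mul_left_comm uu, PowerSeries.coeff_C_mul, Nat.add_sub_cancel_left, ← pow_succ',
      coeff_uu_pow _ _ (by omega), S2_eq (m + j + 1) _ (by omega), Nat.add_sub_cancel,
      Nat.cast_choose ℝ (by omega), show m + j + 1 - (m + 1) + 1 = j + 1 by omega,
      show m + j + 1 - m = j + 1 by omega, Nat.factorial_succ (m + j + 1)]
    push_cast
    have : (m : ℝ) + j + 2 ≠ 0 := by positivity
    have : (m : ℝ) + j + 1 + 1 ≠ 0 := by positivity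
    field_simp
    ring
  rw [hA, hB, coeff_A, coeff_B, hodd, show n + 2 + (n + 1) = n + 1 + (n + 1 + 1) by ring,
    Nat.factorial_succ]
  push_cast
  have : (n : ℝ) + 1 + 1 ≠ 0 := by positivity
  have : (n : ℝ) + 1 ≠ 0 := by positivity
  field_simp
  ring
end

section
/- For integers n ≥ k ≥ 1, the signed Stirling number of the first kind satisfies s(n, k) = (−1)^{n + k²} (n−1)! · det M, where M is the (n−k+1) × (n−k+1) matrix whose (i, j) entry, for 1 ≤ i, j ≤ n−k+1, is C(n, k+i−1)/(k+i−2)! if j = 1, and S(k+j−1, k+i−1) if j ≥ 2 (with the convention S(a, b) = 0 when b > a). -/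
open Real Finset

lemma aux_s1 (n j : ℕ) : s1 n j = (-1 : ℝ) ^ (n + j) * (Nat.stirlingFirst n j : ℝ) := by
  induction n generalizing j with
  | zero =>
    cases j with
    | zero => simp [s1]
    | succ j => simp [s1, Polynomial.coeff_one]
  | succ n ih =>
    unfold s1 at ih ⊢
    rw [descPochhammer_succ_right, mul_sub, Polynomial.coeff_sub, ← Polynomial.C_eq_natCast,
      Polynomial.coeff_mul_C]
    cases j with
    | zero =>
      rw [Polynomial.coeff_mul_X_zero, ih]
      cases n <;> simp
    | succ j =>
      rw [Polynomial.coeff_mul_X, ih, ih, Nat.stirlingFirst_succ_succ]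
      push_cast
      ring

noncomputable def auxT (k m : ℕ) : ℝ :=
  ∑ l ∈ Finset.range (m + 1), (-1 : ℝ) ^ (m + l) * (Nat.choose m l : ℝ) * (l : ℝ) ^ k

lemma aux_T_rec (k m : ℕ) :
    auxT (k + 1) (m + 1) = (m + 1) * auxT k (m + 1) + (m + 1) * auxT k m := by
  have h2 : auxT k m = ∑ l ∈ Finset.range (m + 1 + 1),
      (-1 : ℝ) ^ (m + l) * (Nat.choose m l : ℝ) * (l : ℝ) ^ k := by
    rw [Finset.sum_range_succ]; simp [auxT]
  rw [h2, auxT, auxT, Finset.mul_sum, Finset.mul_sum, ← Finset.sum_add_distrib]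
  refine Finset.sum_congr rfl fun l hl => ?_
  have hl' : l ≤ m + 1 := by simpa [Nat.lt_succ_iff] using hl
  have h := Nat.choose_mul_succ_eq m l
  have h' : (Nat.choose m l : ℝ) * (m + 1) = Nat.choose (m + 1) l * ((m : ℝ) + 1 - l) := by
    rw [← Nat.cast_add_one, ← Nat.cast_sub hl']; exact_mod_cast h
  have e : (-1 : ℝ) ^ (m + 1 + l) = - (-1) ^ (m + l) := by ring
  rw [e]
  linear_combination (-(-1 : ℝ) ^ (m + l) * (l : ℝ) ^ k) * h'

lemma aux_T (k m : ℕ) : auxT k m = (Nat.factorial m : ℝ) * Nat.stirlingSecond k m := by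
  induction k generalizing m with
  | zero =>
    have h := Int.alternating_sum_range_choose (n := m)
    have h' : (∑ l ∈ Finset.range (m + 1), ((-1 : ℝ) ^ l * (Nat.choose m l : ℝ)))
        = if m = 0 then 1 else 0 := by exact_mod_cast congrArg (Int.cast : ℤ → ℝ) h
    have : auxT 0 m = (-1 : ℝ) ^ m *
        ∑ l ∈ Finset.range (m + 1), ((-1 : ℝ) ^ l * (Nat.choose m l : ℝ)) := by
      rw [auxT, Finset.mul_sum]
      exact Finset.sum_congr rfl fun l _ => by ring
    rw [this, h']
    cases m <;> simp
  | succ k ih =>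
    cases m with
    | zero => simp [auxT]
    | succ m =>
      rw [aux_T_rec, ih, ih, Nat.stirlingSecond_succ_succ, Nat.factorial_succ]
      push_cast
      ring

lemma aux_S2 (k m : ℕ) (hk : 1 ≤ k) : S2 k m = Nat.stirlingSecond k m := by
  have h : ∑ l ∈ Finset.Icc 1 m, (-1 : ℝ) ^ (m - l) * (Nat.choose m l : ℝ) * (l : ℝ) ^ k
      = auxT k m := by
    rw [auxT]
    apply Finset.sum_subset_zero_on_sdiff
    · intro l hl
      simp only [Finset.mem_Icc, Finset.mem_range] at *
      omega
    · intro l hl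
      simp only [Finset.mem_sdiff, Finset.mem_Icc, Finset.mem_range] at hl
      have : l = 0 := by omega
      subst this
      have : k ≠ 0 := by omega
      simp [this]
    · intro l hl
      simp only [Finset.mem_Icc] at hl
      have : m + l = (m - l) + 2 * l := by omega
      rw [this, pow_add, pow_mul]
      simp
  rw [S2, h, aux_T]
  have : (Nat.factorial m : ℝ) ≠ 0 := by positivity
  field_simp

def auxL (n i : ℕ) : ℕ :=
  ∑ j ∈ Finset.range (n + 1), Nat.stirlingFirst n j * Nat.stirlingSecond j i

lemma auxL_rec (n i : ℕ) : auxL (n + 1) (i + 1) = (n + i + 1) * auxL n (i + 1) + auxL n i := by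
  have h0 : auxL n (i + 1) = ∑ j ∈ Finset.range (n + 1),
      Nat.stirlingFirst n (j + 1) * Nat.stirlingSecond (j + 1) (i + 1) := by
    rw [Finset.sum_range_succ, auxL, Finset.sum_range_succ']
    simp [Nat.stirlingFirst_eq_zero_of_lt]
  have h1 : auxL (n + 1) (i + 1) = n * auxL n (i + 1) + ∑ j ∈ Finset.range (n + 1),
      Nat.stirlingFirst n j * Nat.stirlingSecond (j + 1) (i + 1) := by
    rw [h0, auxL, Finset.sum_range_succ', Finset.mul_sum, ← Finset.sum_add_distrib]
    simp only [Nat.stirlingFirst_succ_zero, zero_mul, add_zero]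
    refine Finset.sum_congr rfl fun j _ => ?_
    rw [Nat.stirlingFirst_succ_succ]; ring
  have h2 : ∑ j ∈ Finset.range (n + 1),
      Nat.stirlingFirst n j * Nat.stirlingSecond (j + 1) (i + 1)
      = (i + 1) * auxL n (i + 1) + auxL n i := by
    rw [auxL, auxL, Finset.mul_sum, ← Finset.sum_add_distrib]
    refine Finset.sum_congr rfl fun j _ => ?_
    rw [Nat.stirlingSecond_succ_succ]; ring
  rw [h1, h2]; ring

lemma auxL_zero (n : ℕ) : auxL (n + 1) 0 = 0 := by
  rw [auxL, Finset.sum_range_succ']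
  simp

lemma auxL_eq (n i : ℕ) :
    auxL (n + 1) (i + 1) * Nat.factorial i = Nat.factorial n * Nat.choose (n + 1) (i + 1) := by
  induction n generalizing i with
  | zero =>
    rcases i with _ | i
    · decide
    · simp [auxL, Finset.sum_range_succ, Nat.stirlingSecond_eq_zero_of_lt, Nat.choose_eq_zero_of_lt]
  | succ n ih =>
    rw [auxL_rec]
    have key := ih i
    cases i with
    | zero =>
      rw [auxL_zero]
      simp only [Nat.factorial, Nat.succ_eq_add_one, zero_add, Nat.choose_one_right] at *
      linear_combination (n + 2) * key
    | succ i =>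
      have h2 := ih i
      have h3 := Nat.choose_succ_right_eq (n + 1) (i + 1)
      have h4 : Nat.choose (n + 1) (i + 2) * (i + 2) + Nat.choose (n + 1) (i + 1) * (i + 1)
          = Nat.choose (n + 1) (i + 1) * (n + 1) := by
        rcases le_or_gt (i + 1) (n + 1) with h | h
        · rw [show i + 2 = i + 1 + 1 from rfl, h3, ← mul_add, Nat.sub_add_cancel h]
        · rw [Nat.choose_eq_zero_of_lt h, Nat.choose_eq_zero_of_lt (by omega)]; simp
      rw [Nat.factorial_succ] at *
      rw [Nat.choose_succ_succ (n + 1), Nat.factorial_succ n]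
      simp only [Nat.succ_eq_add_one, add_assoc, Nat.reduceAdd] at *
      zify at *
      linear_combination (n + 1 + (i + 2)) * key + (i + 1) * h2 + (Nat.factorial n : ℤ) * h4

theorem stmt_11 (n k : ℕ) (hk : 1 ≤ k) (hkn : k ≤ n) :
    s1 n k =
      (-1 : ℝ) ^ (n + k ^ 2) * (Nat.factorial (n - 1) : ℝ) *
        (Matrix.of fun i j : Fin (n - k + 1) =>
          if (j : ℕ) = 0 then
            (Nat.choose n (k + (i : ℕ)) : ℝ) / (Nat.factorial (k + (i : ℕ) - 1) : ℝ)
          else S2 (k + (j : ℕ)) (k + (i : ℕ))).det := by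
  set A : Matrix (Fin (n - k + 1)) (Fin (n - k + 1)) ℝ :=
    Matrix.of fun i j => (Nat.stirlingSecond (k + (j : ℕ)) (k + (i : ℕ)) : ℝ) with hA
  set x : Fin (n - k + 1) → ℝ :=
    fun j => (Nat.stirlingFirst n (k + (j : ℕ)) : ℝ) / (Nat.factorial (n - 1) : ℝ) with hx
  have hdet : A.det = 1 := by
    rw [Matrix.det_of_isUpperTriangular]
    · simp [hA, Nat.stirlingSecond_self]
    · intro i j hij
      simp only [id] at hij
      have : (j : ℕ) < i := hij
      simp [hA, Nat.stirlingSecond_eq_zero_of_lt, this]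
  have hf : (Nat.factorial (n - 1) : ℝ) ≠ 0 := by positivity
  have hM : (Matrix.of fun i j : Fin (n - k + 1) =>
          if (j : ℕ) = 0 then
            (Nat.choose n (k + (i : ℕ)) : ℝ) / (Nat.factorial (k + (i : ℕ) - 1) : ℝ)
          else S2 (k + (j : ℕ)) (k + (i : ℕ))) = A.updateCol 0 (A.mulVec x) := by
    ext i j
    rw [Matrix.updateCol_apply, Matrix.of_apply]
    have hj : j = 0 ↔ (j : ℕ) = 0 := by rw [Fin.ext_iff]; rfl
    by_cases h : (j : ℕ) = 0
    · rw [if_pos h, if_pos (hj.2 h)]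
      have h1 := auxL_eq (n - 1) (k + i - 1)
      rw [show n - 1 + 1 = n by omega, show k + (i : ℕ) - 1 + 1 = k + i by omega] at h1
      have h2 : auxL n (k + i) = ∑ j ∈ Finset.range (n - k + 1),
          Nat.stirlingFirst n (k + j) * Nat.stirlingSecond (k + j) (k + i) := by
        rw [auxL, show n + 1 = k + (n - k + 1) by omega, Finset.sum_range_add,
          Finset.sum_eq_zero, zero_add]
        intro j hj
        rw [Finset.mem_range] at hj
        rw [Nat.stirlingSecond_eq_zero_of_lt (by omega), mul_zero]
      have h3 : A.mulVec x i = (auxL n (k + i) : ℝ) / (Nat.factorial (n - 1) : ℝ) := by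
        rw [h2, Finset.sum_range, Matrix.mulVec, dotProduct]
        push_cast
        rw [Finset.sum_div]
        refine Finset.sum_congr rfl fun j _ => ?_
        simp only [hA, hx, Matrix.of_apply]
        ring
      rw [h3, div_eq_div_iff (by positivity) hf, mul_comm]
      exact_mod_cast h1.symm
    · rw [if_neg h, if_neg (fun h' => h (hj.1 h')), aux_S2 _ _ (by omega)]
      rfl
  have hc : (A.updateCol 0 (A.mulVec x)).det = x 0 := by
    rw [← Matrix.cramer_apply, Matrix.cramer_eq_adjugate_mulVec, Matrix.mulVec_mulVec,
      Matrix.adjugate_mul, hdet, one_smul, Matrix.one_mulVec]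
  have hs : (-1 : ℝ) ^ (n + k ^ 2) = (-1) ^ (n + k) := by
    rw [pow_add, pow_add, sq, pow_mul]
    rcases Nat.even_or_odd k with h | h <;> simp [h.neg_one_pow]
  rw [hM, hc, hs, aux_s1]
  simp only [hx, Fin.val_zero, add_zero]
  field_simp
end

section
/- For every integer n ≥ 1, the Stirling numbers of the second kind satisfy Σ_{k=0}^{2n−1} [ Σ_{ℓ=1}^{2n−k} ((−1)^{ℓ−1} (ℓ−1)!/2^{ℓ−1}) S(2n−k, ℓ) ] ((−1)^k/2^k) C(2n−1, k) = 0. -/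
open Real Finset

open PowerSeries in
lemma aux_S2_s15 (m r : ℕ) :
    (Nat.factorial r : ℝ) * S2 (m + 1) (r + 1) =
      (Nat.factorial m : ℝ) * coeff m (exp ℝ * (exp ℝ - 1) ^ r) := by
  have h1 : exp ℝ * (exp ℝ - 1) ^ r =
      ∑ i ∈ Finset.range (r + 1),
        PowerSeries.C ((-1 : ℝ) ^ (r - i) * (Nat.choose r i : ℝ)) *
          rescale ((i + 1 : ℕ) : ℝ) (exp ℝ) := by
    rw [sub_eq_add_neg, add_pow, Finset.mul_sum]
    refine Finset.sum_congr rfl fun i _ => ?_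
    rw [← exp_pow_eq_rescale_exp]
    simp only [map_mul, map_pow, map_neg, map_one, map_natCast]
    ring
  have hm : (Nat.factorial m : ℝ) ≠ 0 := by positivity
  have hr : (Nat.factorial r : ℝ) ≠ 0 := by positivity
  rw [h1, map_sum, S2, Finset.mul_sum]
  have h2 : ∀ f : ℕ → ℝ, ∑ l ∈ Finset.Icc 1 (r + 1), f l =
      ∑ i ∈ Finset.range (r + 1), f (i + 1) := by
    intro f
    rw [Finset.range_eq_Ico, Finset.sum_Ico_add' f 0 (r + 1) 1]
    rfl
  rw [h2, Finset.mul_sum, Finset.mul_sum]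
  refine Finset.sum_congr rfl fun i _ => ?_
  have h3 : ((r : ℝ) + 1) * (Nat.choose r i : ℝ) =
      (Nat.choose (r + 1) (i + 1) : ℝ) * ((i : ℝ) + 1) := by
    exact_mod_cast Nat.add_one_mul_choose_eq r i
  have hr1 : (r : ℝ) + 1 ≠ 0 := by positivity
  rw [coeff_C_mul, coeff_rescale, coeff_exp, Nat.factorial_succ, Nat.add_sub_add_right]
  push_cast
  field_simp
  linear_combination (-(((i : ℝ) + 1) ^ m)) * h3

open PowerSeries in
lemma aux_dvd : (X : PowerSeries ℝ) ∣ exp ℝ - 1 := by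
  rw [X_dvd_iff]; simp

open PowerSeries in
lemma aux_even (N : ℕ) (hN : Odd N) (F : PowerSeries ℝ)
    (hF : F = ∑ r ∈ Finset.range (N + 1),
      PowerSeries.C ((-1 / 2 : ℝ) ^ r) * (exp ℝ * (exp ℝ - 1) ^ r)) :
    coeff N (F * rescale (-1 / 2 : ℝ) (exp ℝ)) = 0 := by
  set G := rescale (-1 / 2 : ℝ) (exp ℝ) with hG
  set H := rescale (1 / 2 : ℝ) (exp ℝ) with hH
  have hHG : H * G = 1 := by
    rw [hH, hG, exp_mul_exp_eq_exp_add]; norm_num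
  have hHH : H * H = exp ℝ := by
    rw [hH, exp_mul_exp_eq_exp_add]; norm_num
  have hc : (PowerSeries.C (-1 / 2 : ℝ)) * 2 = -1 := by
    rw [show (2 : PowerSeries ℝ) = PowerSeries.C (2 : ℝ) from (map_ofNat PowerSeries.C 2).symm, ← map_mul,
      show (-1 / 2 : ℝ) * 2 = -1 by norm_num, map_neg, map_one]
  set u := PowerSeries.C (-1 / 2 : ℝ) * (exp ℝ - 1) with hu
  have hF2 : F = exp ℝ * ∑ r ∈ Finset.range (N + 1), u ^ r := by
    rw [hF, Finset.mul_sum]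
    refine Finset.sum_congr rfl fun i _ => ?_
    rw [hu, map_pow, mul_pow]; ring
  have hgeom := mul_neg_geom_sum u (N + 1)
  have hu2 : (1 - u) * 2 = exp ℝ + 1 := by
    rw [hu]; linear_combination (-(exp ℝ - 1)) * hc
  have hFe : F * (exp ℝ + 1) = 2 * exp ℝ * (1 - u ^ (N + 1)) := by
    rw [hF2, ← hu2, ← hgeom]; ring
  have hg : (F * G) * (H + G) = 2 * (1 - u ^ (N + 1)) := by
    have : (F * G) * (H + G) = F * (exp ℝ + 1) * (G * G) := by
      rw [← hHH]; linear_combination (-F * (H * G)) * hHG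
    rw [this, hFe, ← hHH]
    linear_combination (2 * (1 - u ^ (N + 1)) * (H * G + 1)) * hHG
  have hrG : rescale (-1 : ℝ) G = H := by
    rw [hG, hH, rescale_rescale]; norm_num
  have hrH : rescale (-1 : ℝ) H = G := by
    rw [hG, hH, rescale_rescale]; norm_num
  have hg' : rescale (-1 : ℝ) (F * G) * (H + G) =
      2 * (1 - (rescale (-1 : ℝ) u) ^ (N + 1)) := by
    have := congrArg (rescale (-1 : ℝ)) hg
    rw [map_mul, map_add, hrG, hrH, map_mul (rescale (-1 : ℝ)) 2, map_sub, map_pow, map_one,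
      map_ofNat] at this
    rw [← this]; ring
  have hXu : (X : PowerSeries ℝ) ∣ u := Dvd.dvd.mul_left aux_dvd _
  have hXu' : (X : PowerSeries ℝ) ∣ rescale (-1 : ℝ) u := by
    rw [X_dvd_iff] at hXu ⊢
    rw [← coeff_zero_eq_constantCoeff_apply] at hXu ⊢
    rw [coeff_rescale, hXu, mul_zero]
  have hdvd : (X : PowerSeries ℝ) ^ (N + 1) ∣
      (F * G - rescale (-1 : ℝ) (F * G)) * (H + G) := by
    rw [sub_mul, hg, hg']
    have : (2 * (1 - u ^ (N + 1)) - 2 * (1 - (rescale (-1 : ℝ) u) ^ (N + 1))) =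
      2 * ((rescale (-1 : ℝ) u) ^ (N + 1) - u ^ (N + 1)) := by ring
    rw [this]
    exact Dvd.dvd.mul_left (dvd_sub (pow_dvd_pow_of_dvd hXu' _) (pow_dvd_pow_of_dvd hXu _)) _
  have hunit : IsUnit (H + G) := by
    rw [isUnit_iff_constantCoeff, ← coeff_zero_eq_constantCoeff_apply, map_add, hH, hG,
      coeff_rescale, coeff_rescale]
    simp only [pow_zero, coeff_exp]
    norm_num
  rw [hunit.dvd_mul_right, X_pow_dvd_iff] at hdvd
  have := hdvd N (Nat.lt_succ_self N)
  rw [map_sub, coeff_rescale, hN.neg_one_pow] at this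
  linarith

open PowerSeries in
lemma aux_zero_s15 (m r : ℕ) (h : m < r) : coeff m (exp ℝ * (exp ℝ - 1) ^ r) = 0 := by
  have : (X : PowerSeries ℝ) ^ r ∣ exp ℝ * (exp ℝ - 1) ^ r :=
    Dvd.dvd.mul_left (pow_dvd_pow_of_dvd aux_dvd _) _
  exact X_pow_dvd_iff.1 this m h

open PowerSeries in
theorem aux_inner (N m : ℕ) (hm : m ≤ N) :
    (∑ ℓ ∈ Finset.Icc 1 (m + 1),
      ((-1 : ℝ) ^ (ℓ - 1) * (Nat.factorial (ℓ - 1) : ℝ) / 2 ^ (ℓ - 1)) * S2 (m + 1) ℓ) =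
    (Nat.factorial m : ℝ) * coeff m (∑ r ∈ Finset.range (N + 1),
      PowerSeries.C ((-1 / 2 : ℝ) ^ r) * (exp ℝ * (exp ℝ - 1) ^ r)) := by
  have h2 : ∀ f : ℕ → ℝ, ∑ l ∈ Finset.Icc 1 (m + 1), f l =
      ∑ i ∈ Finset.range (m + 1), f (i + 1) := by
    intro f
    rw [Finset.range_eq_Ico, Finset.sum_Ico_add' f 0 (m + 1) 1]
    rfl
  rw [h2, map_sum, Finset.mul_sum]
  rw [← Finset.sum_subset (Finset.range_mono (Nat.succ_le_succ hm))]
  · refine Finset.sum_congr rfl fun r _ => ?_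
    rw [coeff_C_mul, Nat.add_sub_cancel, div_pow]
    linear_combination ((-1 : ℝ) ^ r / 2 ^ r) * aux_S2_s15 m r
  · intro r _ hr
    rw [coeff_C_mul, aux_zero_s15 m r (by simpa using hr)]
    simp

theorem stmt_15 (n : ℕ) (hn : 1 ≤ n) :
    ∑ k ∈ Finset.range (2 * n),
        (∑ ℓ ∈ Finset.Icc 1 (2 * n - k),
          ((-1 : ℝ) ^ (ℓ - 1) * (Nat.factorial (ℓ - 1) : ℝ) / 2 ^ (ℓ - 1)) *
            S2 (2 * n - k) ℓ) *
          ((-1 : ℝ) ^ k / 2 ^ k) * (Nat.choose (2 * n - 1) k : ℝ) = 0 := by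
  obtain ⟨N, hN⟩ : ∃ N, 2 * n = N + 1 := ⟨2 * n - 1, by omega⟩
  have hodd : Odd N := ⟨n - 1, by omega⟩
  have key := aux_even N hodd _ rfl
  rw [mul_comm, PowerSeries.coeff_mul, Finset.Nat.sum_antidiagonal_eq_sum_range_succ_mk] at key
  rw [hN, Nat.add_sub_cancel, ← mul_zero (Nat.factorial N : ℝ), ← key, Finset.mul_sum]
  refine Finset.sum_congr rfl fun k hk => ?_
  have hk' : k ≤ N := by
    have := Finset.mem_range.1 hk
    omega
  have e : N + 1 - k = (N - k) + 1 := by omega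
  rw [e, aux_inner N (N - k) (Nat.sub_le _ _), PowerSeries.coeff_rescale, PowerSeries.coeff_exp]
  have hc : (Nat.choose N k : ℝ) * (Nat.factorial k : ℝ) * (Nat.factorial (N - k) : ℝ) =
      (Nat.factorial N : ℝ) := by
    exact_mod_cast Nat.choose_mul_factorial_mul_factorial hk'
  have hkf : (Nat.factorial k : ℝ) ≠ 0 := by positivity
  rw [← hc, div_pow]
  simp only [map_div₀, map_one, map_natCast]
  field_simp
end
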